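/- Let G be a group, H ≤ G of index 2, χ : G → {±1} the character with kernel H, and M a G-module that is a vector space over a field of characteristic ≠ 2. Then restriction induces an isomorphism H¹(G, M ⊗ χ) ≅ H¹(H, M)⁻, the −1-eigenspace for the conjugation action of G/H on H¹(H, M). -/

import Mathlib

open scoped Classical

section GroupCohomologySetup

variable {k : Type*} [CommRing k] {H : Type*} [Group H]
  {M : Type*} [AddCommGroup M] [Module k M]

/-- The `k`-module of 1-cocycles of a representation. -/
def Z1 (ρ : Representation k H M) : Submodule k (H → M) where
  carrier := {φ | ∀ g h : H, φ (g * h) = φ g + ρ g (φ h)}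
  add_mem' := by
    intro φ ψ hφ hψ g h
    simp only [Pi.add_apply, hφ g h, hψ g h, map_add]
    abel
  zero_mem' := by intro g h; simp
  smul_mem' := by
    intro a φ hφ g h
    simp only [Pi.smul_apply, hφ g h, map_smul, smul_add]

/-- The coboundary map `M → (H → M)`, `m ↦ (g ↦ ρ(g)m − m)`. -/
def dZero (ρ : Representation k H M) : M →ₗ[k] (H → M) where
  toFun m := fun g => ρ g m - m
  map_add' x y := by funext g; simp only [map_add, Pi.add_apply]; abel
  map_smul' a x := by funext g; simp [map_smul, smul_sub]

/-- 1-coboundaries, as a submodule of the 1-cocycles. -/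
def B1 (ρ : Representation k H M) : Submodule k (Z1 ρ) :=
  (LinearMap.range (dZero ρ)).comap (Z1 ρ).subtype

/-- First group cohomology `H¹ = Z¹/B¹`. -/
abbrev H1 (ρ : Representation k H M) := Z1 ρ ⧸ B1 ρ

end GroupCohomologySetup

/-!
Corestriction `cor : H¹(H, M) → H¹(G, M)` from a normal subgroup of finite index `n` satisfies
`cor ∘ res = n`, while `res ∘ cor` is the sum of the conjugations by coset representatives. If `n`
is invertible, restriction is therefore injective with image the conjugation invariants. For
`n = 2`, apply this to the twist `M ⊗ χ`: an element `c ∉ H` acts on it through `-ρ(c)`, so that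
invariance for `M ⊗ χ` is anti-invariance for `M`.
-/

section Functoriality

variable {k : Type*} [CommRing k] {G K : Type*} [Group G] [Group K]
  {M N : Type*} [AddCommGroup M] [Module k M] [AddCommGroup N] [Module k N]
  {ρ : Representation k G M} {σ : Representation k K N}

lemma Z1.apply_mul (φ : Z1 ρ) (g h : G) : φ.1 (g * h) = φ.1 g + ρ g (φ.1 h) :=
  φ.2 g h

lemma Z1.map_apply_conj (φ : Z1 ρ) (s g : G) :
    ρ s (φ.1 (s⁻¹ * g * s)) = φ.1 g + (ρ g (φ.1 s) - φ.1 s) := by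
  have h : φ.1 s + ρ s (φ.1 (s⁻¹ * g * s)) = φ.1 g + ρ g (φ.1 s) := by
    rw [← Z1.apply_mul, ← Z1.apply_mul]
    group
  rw [← add_sub_assoc, ← h, add_sub_cancel_left]

lemma mem_B1_iff {φ : Z1 ρ} : φ ∈ B1 ρ ↔ ∃ m : M, ∀ g, φ.1 g = ρ g m - m :=
  exists_congr fun _ => funext_iff.trans (forall_congr' fun _ => eq_comm)

lemma H1.mk_eq_mk_iff {φ ψ : Z1 ρ} :
    (Submodule.Quotient.mk φ : H1 ρ) = Submodule.Quotient.mk ψ ↔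
      ∃ m : M, ∀ g, φ.1 g = ψ.1 g + (ρ g m - m) := by
  rw [Submodule.Quotient.eq, mem_B1_iff]
  exact exists_congr fun m => forall_congr' fun g => sub_eq_iff_eq_add'

/-- The map on 1-cocycles induced by a group homomorphism `f : K → G` and a `K`-equivariant map
`l : M → N`. -/
def Z1.map (f : K →* G) (l : Representation.IntertwiningMap (ρ.comp f) σ) : Z1 ρ →ₗ[k] Z1 σ where
  toFun φ := ⟨fun x => l (φ.1 (f x)), fun x y => by
    have hl : l (ρ (f x) (φ.1 (f y))) = σ x (l (φ.1 (f y))) := l.isIntertwining _ _ x _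
    simp only [map_mul, Z1.apply_mul, map_add, hl]⟩
  map_add' _ _ := Subtype.ext <| funext fun _ => map_add l _ _
  map_smul' _ _ := Subtype.ext <| funext fun _ => map_smul l _ _

lemma Z1.map_apply (f : K →* G) (l : Representation.IntertwiningMap (ρ.comp f) σ) (φ : Z1 ρ)
    (x : K) : (Z1.map f l φ).1 x = l (φ.1 (f x)) :=
  rfl

/-- The map on first cohomology induced by a group homomorphism `f : K → G` and a `K`-equivariant
map `l : M → N`. -/
def H1.map (f : K →* G) (l : Representation.IntertwiningMap (ρ.comp f) σ) : H1 ρ →ₗ[k] H1 σ :=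
  (B1 ρ).mapQ (B1 σ) (Z1.map f l) fun φ hφ => by
    obtain ⟨m, hm⟩ := mem_B1_iff.1 hφ
    refine mem_B1_iff.2 ⟨l m, fun x => ?_⟩
    calc l (φ.1 (f x)) = l (ρ (f x) m) - l m := by rw [hm, map_sub]
      _ = σ x (l m) - l m := congrArg (· - l m) (l.isIntertwining _ _ x m)

lemma H1.map_mk_eq_mk {f : K →* G} {l : Representation.IntertwiningMap (ρ.comp f) σ} {φ : Z1 ρ}
    {ψ : Z1 σ} (h : ∀ x, ψ.1 x = l (φ.1 (f x))) :
    H1.map f l (Submodule.Quotient.mk φ) = Submodule.Quotient.mk ψ :=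
  congrArg Submodule.Quotient.mk (Subtype.ext (funext h)).symm

end Functoriality

section Restriction

variable {k : Type*} [CommRing k] {G : Type*} [Group G]
  {M : Type*} [AddCommGroup M] [Module k M] (ρ : Representation k G M) (H : Subgroup G)

/-- Restriction `H¹(G, M) → H¹(H, M)`. -/
def H1.res : H1 ρ →ₗ[k] H1 (ρ.comp H.subtype) :=
  H1.map H.subtype (.id _)

variable [H.Normal]

/-- The action of `g : G` on `M`, as an equivariant map along the conjugation `h ↦ g⁻¹ * h * g`
of a normal subgroup. -/
def conjIntertwiningMap (g : G) :
    Representation.IntertwiningMap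
      ((ρ.comp H.subtype).comp (MulAut.conjNormal g : MulAut H).symm.toMonoidHom)
      (ρ.comp H.subtype) where
  toLinearMap := ρ g
  isIntertwining' h := by
    change ρ g * ρ ((MulAut.conjNormal g).symm h : H) = ρ h * ρ g
    rw [← map_mul, ← map_mul, MulAut.conjNormal_symm_apply]
    group

/-- Conjugation by `g : G` on the 1-cocycles of a normal subgroup,
`φ ↦ (h ↦ g • φ (g⁻¹ * h * g))`. -/
def Z1.conj (g : G) : Z1 (ρ.comp H.subtype) →ₗ[k] Z1 (ρ.comp H.subtype) :=
  Z1.map _ (conjIntertwiningMap ρ H g)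

lemma Z1.conj_apply (g : G) (φ : Z1 (ρ.comp H.subtype)) (h : H) :
    (Z1.conj ρ H g φ).1 h = ρ g (φ.1 ((MulAut.conjNormal g).symm h)) :=
  rfl

/-- The conjugation action of `G` on `H¹(H, M)` for a normal subgroup `H`. -/
def H1.conj : Representation k G (H1 (ρ.comp H.subtype)) where
  toFun g := H1.map _ (conjIntertwiningMap ρ H g)
  map_one' := by
    ext φ
    have conj_one : Z1.conj ρ H 1 φ = φ := by
      ext h
      simp [Z1.conj_apply, MulAut.one_def]
    exact congrArg Submodule.Quotient.mk conj_one
  map_mul' a b := by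
    ext φ
    have conj_mul : Z1.conj ρ H (a * b) φ = Z1.conj ρ H a (Z1.conj ρ H b φ) := by
      ext h
      simp [Z1.conj_apply, MulAut.mul_def]
    exact congrArg Submodule.Quotient.mk conj_mul

lemma H1.conj_mk (g : G) (φ : Z1 (ρ.comp H.subtype)) :
    H1.conj ρ H g (Submodule.Quotient.mk φ) = Submodule.Quotient.mk (Z1.conj ρ H g φ) :=
  rfl

variable {ρ H}

lemma H1.conj_apply_of_mem {g : G} (hg : g ∈ H) (x : H1 (ρ.comp H.subtype)) :
    H1.conj ρ H g x = x := by
  obtain ⟨φ, rfl⟩ := Submodule.Quotient.mk_surjective _ x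
  rw [H1.conj_mk]
  refine H1.mk_eq_mk_iff.2 ⟨φ.1 ⟨g, hg⟩, fun h => ?_⟩
  have conj_eq : (MulAut.conjNormal g).symm h = (⟨g, hg⟩⁻¹ * h * ⟨g, hg⟩ : H) :=
    Subtype.ext (MulAut.conjNormal_symm_apply g h)
  rw [← Z1.map_apply_conj, Z1.conj_apply, conj_eq]
  rfl

lemma H1.conj_res (g : G) (x : H1 ρ) : H1.conj ρ H g (H1.res ρ H x) = H1.res ρ H x := by
  obtain ⟨φ, rfl⟩ := Submodule.Quotient.mk_surjective _ x
  refine H1.mk_eq_mk_iff.2 ⟨φ.1 g, fun h => ?_⟩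
  calc ρ g (φ.1 ((MulAut.conjNormal g).symm h : H)) = ρ g (φ.1 (g⁻¹ * h * g)) := by
        rw [MulAut.conjNormal_symm_apply]
    _ = φ.1 h + (ρ h (φ.1 g) - φ.1 g) := Z1.map_apply_conj φ g h

end Restriction

section CosetRepresentatives

variable {G : Type*} [Group G] {H : Subgroup G}

/-- The element `t(q)⁻¹ * g * t(g⁻¹ • q)` of `H`, where `t = Quotient.out` is the chosen transversal
of `G ⧸ H`. -/
noncomputable def schreierElement (H : Subgroup G) (g : G) (q : G ⧸ H) : H :=
  ⟨q.out⁻¹ * (g * (g⁻¹ • q).out), QuotientGroup.eq.1 <| by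
    rw [← smul_eq_mul, MulAction.Quotient.mk_smul_out, smul_inv_smul, QuotientGroup.out_eq']⟩

lemma out_mul_schreierElement (g : G) (q : G ⧸ H) :
    q.out * (schreierElement H g q : G) = g * (g⁻¹ • q).out :=
  mul_inv_cancel_left _ _

lemma schreierElement_mul (g h : G) (q : G ⧸ H) :
    schreierElement H (g * h) q = schreierElement H g q * schreierElement H h (g⁻¹ • q) := by
  apply Subtype.ext
  simp [schreierElement, mul_smul, mul_assoc]

lemma schreierElement_coe_of_normal [H.Normal] (h : H) (q : G ⧸ H) :
    schreierElement H (h : G) q = (MulAut.conjNormal q.out).symm h := by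
  have hq : (h : G)⁻¹ • q = q := by
    induction q using QuotientGroup.induction_on with
    | H g => simp
  apply Subtype.ext
  simp [schreierElement, hq, mul_assoc]

end CosetRepresentatives

section Corestriction

variable {k : Type*} [CommRing k] {G : Type*} [Group G]
  {M : Type*} [AddCommGroup M] [Module k M] (ρ : Representation k G M) (H : Subgroup G)

lemma map_out_map_schreierElement (g : G) (q : G ⧸ H) (m : M) :
    ρ q.out (ρ (schreierElement H g q) m) = ρ g (ρ (g⁻¹ • q).out m) := by
  simp only [← Module.End.mul_apply, ← map_mul, out_mul_schreierElement]

variable [Fintype (G ⧸ H)]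

/-- Corestriction of 1-cocycles from a subgroup of finite index, with respect to the transversal
`Quotient.out`. -/
noncomputable def Z1.cor : Z1 (ρ.comp H.subtype) →ₗ[k] Z1 ρ where
  toFun φ := ⟨fun g => ∑ q : G ⧸ H, ρ q.out (φ.1 (schreierElement H g q)), fun g h => by
    have summand_eq (q : G ⧸ H) : ρ q.out (φ.1 (schreierElement H (g * h) q)) =
        ρ q.out (φ.1 (schreierElement H g q)) +
          ρ g (ρ (g⁻¹ • q).out (φ.1 (schreierElement H h (g⁻¹ • q)))) := by
      rw [schreierElement_mul, Z1.apply_mul, map_add, ← map_out_map_schreierElement]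
      rfl
    simp only [summand_eq, Finset.sum_add_distrib, ← map_sum]
    rw [(MulAction.bijective g⁻¹).sum_comp fun q => ρ q.out (φ.1 (schreierElement H h q))]⟩
  map_add' φ ψ := Subtype.ext <| funext fun g => by simp [Finset.sum_add_distrib]
  map_smul' a φ := Subtype.ext <| funext fun g => by simp [Finset.smul_sum]

lemma Z1.cor_apply (φ : Z1 (ρ.comp H.subtype)) (g : G) :
    (Z1.cor ρ H φ).1 g = ∑ q : G ⧸ H, ρ q.out (φ.1 (schreierElement H g q)) :=
  rfl

variable {ρ H} in
lemma Z1.cor_mem_B1 {φ : Z1 (ρ.comp H.subtype)} (hφ : φ ∈ B1 (ρ.comp H.subtype)) :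
    Z1.cor ρ H φ ∈ B1 ρ := by
  obtain ⟨m, hm⟩ := mem_B1_iff.1 hφ
  refine mem_B1_iff.2 ⟨∑ q : G ⧸ H, ρ q.out m, fun g => ?_⟩
  have summand_eq (q : G ⧸ H) : ρ q.out (φ.1 (schreierElement H g q)) =
      ρ g (ρ (g⁻¹ • q).out m) - ρ q.out m := by
    rw [hm, map_sub, ← map_out_map_schreierElement]
    rfl
  simp only [Z1.cor_apply, summand_eq, Finset.sum_sub_distrib, ← map_sum]
  rw [(MulAction.bijective g⁻¹).sum_comp fun q : G ⧸ H => ρ q.out m]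

/-- Corestriction `H¹(H, M) → H¹(G, M)` from a subgroup of finite index. -/
noncomputable def H1.cor : H1 (ρ.comp H.subtype) →ₗ[k] H1 ρ :=
  (B1 (ρ.comp H.subtype)).mapQ (B1 ρ) (Z1.cor ρ H) fun _ => Z1.cor_mem_B1

lemma H1.cor_res (x : H1 ρ) : H1.cor ρ H (H1.res ρ H x) = (H.index : k) • x := by
  obtain ⟨φ, rfl⟩ := Submodule.Quotient.mk_surjective _ x
  refine H1.mk_eq_mk_iff.2 ⟨∑ q : G ⧸ H, φ.1 q.out, fun g => ?_⟩
  have summand_eq (q : G ⧸ H) : ρ q.out (φ.1 (schreierElement H g q)) =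
      φ.1 g + (ρ g (φ.1 (g⁻¹ • q).out) - φ.1 q.out) := by
    rw [← add_sub_assoc, ← Z1.apply_mul, ← out_mul_schreierElement, Z1.apply_mul,
      add_sub_cancel_left]
  change ∑ q : G ⧸ H, ρ q.out (φ.1 (schreierElement H g q)) = (H.index : k) • φ.1 g + _
  simp only [summand_eq, Finset.sum_add_distrib, Finset.sum_sub_distrib, ← map_sum]
  rw [(MulAction.bijective g⁻¹).sum_comp fun q : G ⧸ H => φ.1 q.out, Finset.sum_const,
    Finset.card_univ, H.index_eq_card, Nat.card_eq_fintype_card, Nat.cast_smul_eq_nsmul]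

lemma H1.res_cor [H.Normal] (x : H1 (ρ.comp H.subtype)) :
    H1.res ρ H (H1.cor ρ H x) = ∑ q : G ⧸ H, H1.conj ρ H q.out x := by
  obtain ⟨φ, rfl⟩ := Submodule.Quotient.mk_surjective _ x
  have res_cor : Z1.map H.subtype (.id _) (Z1.cor ρ H φ) =
      ∑ q : G ⧸ H, Z1.conj ρ H q.out φ := by
    ext h
    simp [Z1.map_apply, Z1.cor_apply, Z1.conj_apply, schreierElement_coe_of_normal]
  exact (congrArg (B1 (ρ.comp H.subtype)).mkQ res_cor).trans (map_sum _ _ _)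

end Corestriction

section InvertibleIndex

variable {k : Type*} [CommRing k] {G : Type*} [Group G]
  {M : Type*} [AddCommGroup M] [Module k M] (ρ : Representation k G M)
  {H : Subgroup G} [H.FiniteIndex] (hn : IsUnit (H.index : k))

include hn

theorem H1.res_injective : Function.Injective (H1.res ρ H) := by
  have := Fintype.ofFinite (G ⧸ H)
  exact fun x y hxy => hn.smul_left_cancel.1 <| by rw [← H1.cor_res, ← H1.cor_res, hxy]

theorem H1.range_res [H.Normal] : LinearMap.range (H1.res ρ H) = (H1.conj ρ H).invariants := by
  have := Fintype.ofFinite (G ⧸ H)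
  apply le_antisymm
  · rintro _ ⟨x, rfl⟩ g
    exact H1.conj_res g x
  · intro x hx
    obtain ⟨u, hu⟩ := hn
    have res_cor : H1.res ρ H (H1.cor ρ H x) = (H.index : k) • x := by
      rw [H1.res_cor, Finset.sum_congr rfl fun q _ => hx q.out, Finset.sum_const,
        Finset.card_univ, H.index_eq_card, Nat.card_eq_fintype_card, Nat.cast_smul_eq_nsmul]
    refine ⟨(↑u⁻¹ : k) • H1.cor ρ H x, ?_⟩
    rw [map_smul, res_cor, ← hu, smul_smul, Units.inv_mul, one_smul]

end InvertibleIndex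

lemma mem_invariants_iff_of_index_eq_two {k G V : Type*} [CommRing k] [Group G] [AddCommGroup V]
    [Module k V] {τ : Representation k G V} {H : Subgroup G} (hH : H.index = 2) {c : G}
    (hc : c ∉ H) {v : V} (hv : ∀ h ∈ H, τ h v = v) : v ∈ τ.invariants ↔ τ c v = v := by
  refine ⟨fun h => h c, fun hcv g => ?_⟩
  by_cases hg : g ∈ H
  · exact hv g hg
  · have hcg : c⁻¹ * g ∈ H := by simp [Subgroup.mul_mem_iff_of_index_two hH, hc, hg]
    rw [← mul_inv_cancel_left c g, map_mul, Module.End.mul_apply, hv _ hcg, hcv]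

theorem stmt_9_general {k : Type*} [CommRing k] (h2 : IsUnit (2 : k))
    {G : Type*} [Group G] (H : Subgroup G) (hH : H.index = 2) (c : G) (hc : c ∉ H)
    {M : Type*} [AddCommGroup M] [Module k M] (ρ ρχ : Representation k G M)
    (hρχ : ∀ (g : G) (m : M), ρχ g m = if g ∈ H then ρ g m else -(ρ g m)) :
    ∃ ι : H1 (ρ.comp H.subtype) →ₗ[k] H1 (ρ.comp H.subtype),
      (∀ φ ψ : Z1 (ρ.comp H.subtype),
        (∀ h : H, (ψ : ↥H → M) h = ρ c ((φ : ↥H → M) ⟨c⁻¹ * ↑h * c, by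
          simpa using (Subgroup.normal_of_index_eq_two hH).conj_mem ↑h h.2 c⁻¹⟩)) →
        ι (Submodule.Quotient.mk φ) = Submodule.Quotient.mk ψ) ∧
      (∀ x, ι (ι x) = x) ∧
      ∃ r : H1 ρχ →ₗ[k] H1 (ρ.comp H.subtype),
        (∀ (φ : Z1 ρχ) (ψ : Z1 (ρ.comp H.subtype)),
          (∀ h : H, (ψ : ↥H → M) h = (φ : G → M) ↑h) →
          r (Submodule.Quotient.mk φ) = Submodule.Quotient.mk ψ) ∧
        Function.Injective r ∧
        LinearMap.range r = LinearMap.eqLocus ι (-LinearMap.id) := by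
  have := Subgroup.normal_of_index_eq_two hH
  have : H.FiniteIndex := ⟨by simp [hH]⟩
  have hn : IsUnit (H.index : k) := by simpa [hH] using h2
  have res_eq : ρ.comp H.subtype = ρχ.comp H.subtype := by
    ext h m
    simp [hρχ]
  have hρc (m : M) : ρ c m = -ρχ c m := by simp [hρχ, hc]
  simp only [hρc]
  rw [res_eq]
  refine ⟨-H1.conj ρχ H c, fun φ ψ h => ?_, fun x => ?_, H1.res ρχ H,
    fun φ ψ h => H1.map_mk_eq_mk h, H1.res_injective ρχ hn, ?_⟩
  · have conj_eq : Z1.conj ρχ H c φ = -ψ := Subtype.ext <| funext fun x => by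
      rw [Z1.conj_apply, NegMemClass.coe_neg, Pi.neg_apply, h, neg_neg]
      exact congrArg (fun y => ρχ c (φ.1 y)) (Subtype.ext (MulAut.conjNormal_symm_apply c x))
    rw [LinearMap.neg_apply, H1.conj_mk, conj_eq, Submodule.Quotient.mk_neg, neg_neg]
  · simp [← Module.End.mul_apply, ← map_mul,
      H1.conj_apply_of_mem (Subgroup.mul_self_mem_of_index_two hH c)]
  · ext x
    simp [H1.range_res ρχ hn,
      mem_invariants_iff_of_index_eq_two hH hc fun _ hh => H1.conj_apply_of_mem hh x]

/-- for `M` a vector space over a field of characteristic `≠ 2`,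
`H ≤ G` of index 2 and `χ : G → {±1}` the quadratic character with kernel `H`,
restriction induces an isomorphism `H¹(G, M ⊗ χ) ≅ H¹(H, M)⁻`, the `−1`-eigenspace
for the conjugation action of `G/H` on `H¹(H, M)`. Here `ρχ` is the twist of `ρ`
by `χ` (note `(M ⊗ χ)|_H = M|_H`). -/
theorem stmt_9 {k : Type*} [Field k] (h2 : (2 : k) ≠ 0)
    {G : Type*} [Group G] (H : Subgroup G) (hH : H.index = 2)
    (c : G) (hc : c ∉ H) (hnorm : ∀ g ∈ H, ∀ d : G, d * g * d⁻¹ ∈ H)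
    {M : Type*} [AddCommGroup M] [Module k M]
    (ρ : Representation k G M)
    (ρχ : Representation k G M)
    (hρχ : ∀ (g : G) (m : M), ρχ g m = if g ∈ H then ρ g m else -(ρ g m)) :
    ∃ ι : H1 (ρ.comp H.subtype) →ₗ[k] H1 (ρ.comp H.subtype),
      (∀ φ ψ : Z1 (ρ.comp H.subtype),
        (∀ h : H, (ψ : ↥H → M) h =
            ρ c ((φ : ↥H → M) ⟨c⁻¹ * ↑h * c, by simpa using hnorm ↑h h.2 c⁻¹⟩)) →
        ι (Submodule.Quotient.mk φ) = Submodule.Quotient.mk ψ) ∧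
      (∀ x, ι (ι x) = x) ∧
      ∃ r : H1 ρχ →ₗ[k] H1 (ρ.comp H.subtype),
        (∀ (φ : Z1 ρχ) (ψ : Z1 (ρ.comp H.subtype)),
          (∀ h : H, (ψ : ↥H → M) h = (φ : G → M) ↑h) →
          r (Submodule.Quotient.mk φ) = Submodule.Quotient.mk ψ) ∧
        Function.Injective r ∧
        LinearMap.range r = LinearMap.eqLocus ι (-LinearMap.id) :=
  stmt_9_general h2.isUnit H hH c hc ρ ρχ hρχ
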